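/- Let α ≥ 0. Define for s > 1 the symmetric outer bound C̄(s, s^α) = sup_{ρ∈[0,1]} (1/2)·[ log₂(1 + (1−ρ²)·s/(1 + (1−ρ²)·s^α)) + log₂(1 + s + s^α + 2ρ·s^{(1+α)/2}) ]. Then C̄(s, s^α)/log₂(s) tends to max(α/2, 1 − α/2) as s → ∞. -/

import Mathlib

open Real Filter Set

lemma gdof_upper (α s ρ : ℝ) (hα : 0 ≤ α) (hs : 1 < s) (h0 : 0 ≤ ρ) (h1 : ρ ≤ 1) :
    (1 / 2) * (Real.logb 2 (1 + (1 - ρ ^ 2) * s / (1 + (1 - ρ ^ 2) * s ^ α)) +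
              Real.logb 2 (1 + s + s ^ α + 2 * ρ * s ^ ((1 + α) / 2)))
      ≤ max (α / 2) (1 - α / 2) * Real.logb 2 s + (1 / 2) * (Real.logb 2 2 + Real.logb 2 5) := by
  have hs0 : 0 < s := by linarith
  have ht : 0 ≤ 1 - ρ ^ 2 := by nlinarith
  have hp : 0 < s ^ α := rpow_pos_of_pos hs0 _
  have hpa : 0 < s ^ (max 0 (1 - α)) := rpow_pos_of_pos hs0 _
  have hpb : 0 < s ^ (max 1 α) := rpow_pos_of_pos hs0 _
  have hph : 0 < s ^ ((1 + α) / 2) := rpow_pos_of_pos hs0 _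
  have mono : ∀ x y : ℝ, x ≤ y → s ^ x ≤ s ^ y := fun x y h => rpow_le_rpow_of_exponent_le hs.le h
  have e1 : 1 + (1 - ρ ^ 2) * s / (1 + (1 - ρ ^ 2) * s ^ α) ≤ 2 * s ^ (max 0 (1 - α)) := by
    have h2 : (1 - ρ ^ 2) * s / (1 + (1 - ρ ^ 2) * s ^ α) ≤ s ^ (1 - α) := by
      rw [div_le_iff₀ (by positivity)]
      have : s ^ (1 - α) * s ^ α = s := by rw [← rpow_add hs0]; simp
      have h3 : 0 < s ^ (1 - α) := rpow_pos_of_pos hs0 _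
      have : s ^ (1 - α) * (1 + (1 - ρ ^ 2) * s ^ α) = s ^ (1 - α) + (1 - ρ ^ 2) * s := by
        linear_combination (1 - ρ ^ 2) * this
      linarith
    have h3 := mono _ _ (le_max_left 0 (1 - α))
    have h4 := mono _ _ (le_max_right 0 (1 - α))
    rw [rpow_zero] at h3
    linarith
  have e2 : 1 + s + s ^ α + 2 * ρ * s ^ ((1 + α) / 2) ≤ 5 * s ^ (max 1 α) := by
    have h2 := mono 0 (max 1 α) (le_trans zero_le_one (le_max_left _ _))
    have h3 := mono _ _ (le_max_left 1 α)
    have h4 := mono _ _ (le_max_right 1 α)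
    have h5 := mono ((1 + α) / 2) (max 1 α)
      (by linarith [le_max_left 1 α, le_max_right 1 α])
    rw [rpow_zero] at h2
    rw [rpow_one] at h3
    have : ρ * s ^ ((1 + α) / 2) ≤ s ^ ((1 + α) / 2) := mul_le_of_le_one_left hph.le h1
    linarith
  have l1 := Real.logb_le_logb_of_le (b := 2) (by norm_num) (by positivity) e1
  have l2 := Real.logb_le_logb_of_le (b := 2) (by norm_num) (by positivity) e2
  rw [Real.logb_mul (by norm_num) hpa.ne', Real.logb_rpow_eq_mul_logb_of_pos hs0] at l1
  rw [Real.logb_mul (by norm_num) hpb.ne', Real.logb_rpow_eq_mul_logb_of_pos hs0] at l2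
  have hm : max (α / 2) (1 - α / 2) = (1 / 2) * (max 0 (1 - α) + max 1 α) := by
    rcases le_total α 1 with h | h
    · rw [max_eq_right (by linarith), max_eq_right (by linarith), max_eq_left h]; ring
    · rw [max_eq_left (by linarith), max_eq_left (by linarith), max_eq_right h]; ring
  rw [hm]
  linarith

lemma gdof_lower (α s : ℝ) (hα : 0 ≤ α) (hs : 1 < s) :
    max (α / 2) (1 - α / 2) * Real.logb 2 s + (1 / 2) * Real.logb 2 (1 / 2) ≤
    (1 / 2) * (Real.logb 2 (1 + (1 - (0:ℝ) ^ 2) * s / (1 + (1 - (0:ℝ) ^ 2) * s ^ α)) +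
              Real.logb 2 (1 + s + s ^ α + 2 * 0 * s ^ ((1 + α) / 2))) := by
  have hs0 : 0 < s := by linarith
  have hp : 0 < s ^ α := rpow_pos_of_pos hs0 _
  have hp1 : 1 ≤ s ^ α := one_le_rpow hs.le hα
  have hpa : 0 < s ^ (max 0 (1 - α)) := rpow_pos_of_pos hs0 _
  have hpb : 0 < s ^ (max 1 α) := rpow_pos_of_pos hs0 _
  have h3 : 0 < s ^ (1 - α) := rpow_pos_of_pos hs0 _
  have e1 : (1 / 2) * s ^ (max 0 (1 - α)) ≤
      1 + (1 - (0:ℝ) ^ 2) * s / (1 + (1 - (0:ℝ) ^ 2) * s ^ α) := by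
    have h2 : (1 / 2) * s ^ (1 - α) ≤ (1 - (0:ℝ) ^ 2) * s / (1 + (1 - (0:ℝ) ^ 2) * s ^ α) := by
      rw [le_div_iff₀ (by norm_num; positivity)]
      have : s ^ (1 - α) * s ^ α = s := by rw [← rpow_add hs0]; simp
      nlinarith
    rcases max_choice 0 (1 - α) with h | h <;> rw [h]
    · rw [rpow_zero]; linarith
    · linarith
  have e2 : s ^ (max 1 α) ≤ 1 + s + s ^ α + 2 * 0 * s ^ ((1 + α) / 2) := by
    rcases max_choice 1 α with h | h <;> rw [h]
    · rw [rpow_one]; linarith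
    · linarith
  have l1 := Real.logb_le_logb_of_le (b := 2) (by norm_num) (by positivity) e1
  have l2 := Real.logb_le_logb_of_le (b := 2) (by norm_num) (by positivity) e2
  rw [Real.logb_mul (by norm_num) hpa.ne', Real.logb_rpow_eq_mul_logb_of_pos hs0] at l1
  rw [Real.logb_rpow_eq_mul_logb_of_pos hs0] at l2
  have hm : max (α / 2) (1 - α / 2) = (1 / 2) * (max 0 (1 - α) + max 1 α) := by
    rcases le_total α 1 with h | h
    · rw [max_eq_right (by linarith), max_eq_right (by linarith), max_eq_left h]; ring
    · rw [max_eq_left (by linarith), max_eq_left (by linarith), max_eq_right h]; ring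
  rw [hm]
  linarith

lemma gdof_aux (m c : ℝ) :
    Tendsto (fun s : ℝ => m + c / Real.logb 2 s) atTop (nhds m) := by
  have h := (Real.tendsto_logb_atTop (b := 2) (by norm_num)).const_div_atTop c
  simpa using h.const_add m

/-- Generalized degrees-of-freedom of the symmetric outer bound:
the "V curve" `max(α/2, 1 − α/2)`. -/
theorem outer_bound_gdof (α : ℝ) (hα : 0 ≤ α) :
    Tendsto (fun s : ℝ =>
        sSup ((fun ρ : ℝ =>
            (1 / 2) * (Real.logb 2 (1 + (1 - ρ ^ 2) * s / (1 + (1 - ρ ^ 2) * s ^ α)) +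
              Real.logb 2 (1 + s + s ^ α + 2 * ρ * s ^ ((1 + α) / 2)))) ''
          Set.Icc (0 : ℝ) 1) / Real.logb 2 s)
      atTop (nhds (max (α / 2) (1 - α / 2))) := by
  refine tendsto_of_tendsto_of_tendsto_of_le_of_le'
    (gdof_aux _ ((1 / 2) * Real.logb 2 (1 / 2)))
    (gdof_aux _ ((1 / 2) * (Real.logb 2 2 + Real.logb 2 5))) ?_ ?_
  · filter_upwards [eventually_gt_atTop 1] with s hs
    have hL : 0 < Real.logb 2 s := Real.logb_pos (by norm_num) hs
    rw [le_div_iff₀ hL, add_mul, div_mul_cancel₀ _ hL.ne']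
    refine (gdof_lower α s hα hs).trans (le_csSup ?_ ⟨0, ⟨le_rfl, zero_le_one⟩, rfl⟩)
    refine ⟨max (α / 2) (1 - α / 2) * Real.logb 2 s +
      (1 / 2) * (Real.logb 2 2 + Real.logb 2 5), ?_⟩
    · rintro _ ⟨ρ, hρ, rfl⟩
      exact gdof_upper α s ρ hα hs hρ.1 hρ.2
  · filter_upwards [eventually_gt_atTop 1] with s hs
    have hL : 0 < Real.logb 2 s := Real.logb_pos (by norm_num) hs
    rw [div_le_iff₀ hL, add_mul, div_mul_cancel₀ _ hL.ne']
    refine csSup_le (Set.Nonempty.image _ ⟨0, ⟨le_rfl, zero_le_one⟩⟩) ?_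
    rintro _ ⟨ρ, hρ, rfl⟩
    exact gdof_upper α s ρ hα hs hρ.1 hρ.2
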